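/- Define SN(t) := (m(t), deg_μ(t)) ∈ !ℕ × ℕ, ordered by the (well-founded) lexicographic order of the multiset order and the usual order on ℕ. If t →ᵣ t' + T for resource λμ-terms t, t' and a sum T, then SN(t) > SN(t'). Consequently, the resource reduction →ᵣ on sums in 2⟨λμʳ⟩ is strongly normalising: there is no infinite sequence of →ᵣ-reduction steps between sums. -/

import Mathlib

/-!
Every reduction step either consumes a bag (λ- and μ-steps) or a μ-abstraction (ρ-steps).

In a λ- or μ-redex `t[ū]` the total number `D` of μ-abstractions is preserved, because each resource
of `ū` is used exactly once (`linSub_spec`, `nApp_spec`). The consumed bag has depth `0`, hence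
weight `D`. Every surviving bag keeps its depth or sinks deeper, so its weight does not increase,
and every bag created by a μ-step lies below a named subterm, so its weight is `< D`. The multiset
measure therefore drops strictly. This is the content of the relation `Dom` on multisets of depths
and of `mlt_of_dom`.

In a ρ-step the number of μ-abstractions drops by one together with the depths of all bags of the
redex, so the weights inside the redex are unchanged.

For the closure under contexts both cases are recorded in one relation `Dec`, which says that the
number of μ-abstractions does not increase, and that either the multiset of weights decreases for
`MLT`, or it decreases weakly pointwise while the number of μ-abstractions decreases strictly. A
context adds a constant to all weights of the redex, and the weights of the bags of the context
itself decrease weakly, so `Dec` is preserved (`Dec.add`).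

Termination on sums follows since replacing one addend by finitely many smaller ones is an instance
of the well-founded relation `Relation.CutExpand`.
-/


set_option maxHeartbeats 1000000

namespace RLMu

inductive Rt : Type where
  | var : ℕ → Rt
  | lam : ℕ → Rt → Rt
  | app : Rt → List Rt → Rt
  | mu  : ℕ → ℕ → Rt → Rt

noncomputable instance : DecidableEq Rt := Classical.decEq _

namespace Rt

mutual
  def renameN (a b : ℕ) : Rt → Rt
    | var y => var y
    | lam y t => lam y (renameN a b t)
    | app t ts => app (renameN a b t) (renameNBag a b ts)
    | mu g e t =>
        if g = b then mu g e t
        else mu g (if e = b then a else e) (renameN a b t)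
  def renameNBag (a b : ℕ) : List Rt → List Rt
    | [] => []
    | t :: ts => renameN a b t :: renameNBag a b ts
end

def modifyIdx (t : Rt) : List (List Rt) → ℕ → List (List Rt)
  | [], _ => []
  | l :: ls, 0 => (t :: l) :: ls
  | l :: ls, i + 1 => l :: modifyIdx t ls i

def splits (n : ℕ) : List Rt → Multiset (List (List Rt))
  | [] => {List.replicate n []}
  | t :: ts => (splits n ts).bind fun ls => (Multiset.range n).map fun i => modifyIdx t ls i

def splits2 : List Rt → Multiset (List Rt × List Rt)
  | [] => {([], [])}
  | t :: ts => (splits2 ts).bind fun p => {(t :: p.1, p.2), (p.1, t :: p.2)}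

-- the (quantitative) linear substitution t⟨[ū]/x⟩ : the sum over all ways of
-- assigning the elements of the bag bijectively to the free occurrences of x in t
mutual
  def linSub (x : ℕ) : Rt → List Rt → Multiset Rt
    | var y, bag =>
        if y = x then (match bag with | [u] => ({u} : Multiset Rt) | _ => 0)
        else (match bag with | [] => ({var y} : Multiset Rt) | _ => 0)
    | lam y t, bag =>
        if y = x then (match bag with | [] => ({lam y t} : Multiset Rt) | _ => 0)
        else (linSub x t bag).map (lam y)
    | mu g e t, bag => (linSub x t bag).map (mu g e)
    | app t ts, bag =>
        (splits (ts.length + 1) bag).bind fun ls =>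
          match ls with
          | l0 :: rest =>
              (linSub x t l0).bind fun s =>
                (linSubBag x ts rest).map fun ss => app s ss
          | [] => 0
  def linSubBag (x : ℕ) : List Rt → List (List Rt) → Multiset (List Rt)
    | [], [] => {([] : List Rt)}
    | [], _ :: _ => 0
    | _ :: _, [] => 0
    | t :: ts, l :: ls =>
        (linSub x t l).bind fun s => (linSubBag x ts ls).map fun ss => s :: ss
end

end Rt

end RLMu

namespace RLMu
namespace Rt

-- the (quantitative) linear named application ⟨t⟩_a[ū]
mutual
  def nApp (a : ℕ) : Rt → List Rt → Multiset Rt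
    | var y, bag => (match bag with | [] => ({var y} : Multiset Rt) | _ => 0)
    | lam y t, bag => (nApp a t bag).map (lam y)
    | mu g e t, bag =>
        if g = a then (match bag with | [] => ({mu g e t} : Multiset Rt) | _ => 0)
        else if e = a then
          (splits2 bag).bind fun p =>
            (nApp a t p.1).map fun s => mu g e (app s p.2)
        else (nApp a t bag).map (mu g e)
    | app t ts, bag =>
        (splits (ts.length + 1) bag).bind fun ls =>
          match ls with
          | l0 :: rest =>
              (nApp a t l0).bind fun s =>
                (nAppBag a ts rest).map fun ss => app s ss
          | [] => 0
  def nAppBag (a : ℕ) : List Rt → List (List Rt) → Multiset (List Rt)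
    | [], [] => {([] : List Rt)}
    | [], _ :: _ => 0
    | _ :: _, [] => 0
    | t :: ts, l :: ls =>
        (nApp a t l).bind fun s => (nAppBag a ts ls).map fun ss => s :: ss
end

mutual
  def degName (a : ℕ) : Rt → ℕ
    | var _ => 0
    | lam _ t => degName a t
    | app t ts => degName a t + degNameBag a ts
    | mu g e t => if g = a then 0 else (if e = a then 1 else 0) + degName a t
  def degNameBag (a : ℕ) : List Rt → ℕ
    | [] => 0
    | t :: ts => degName a t + degNameBag a ts
end

/-- the linear named application `⟨[e]t⟩_g [ū]` on the named term `[e]t`, a named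
term `[e']t'` being represented by the pair `(e', t')` -/
def nAppNamed (g e : ℕ) (t : Rt) (bag : List Rt) : Multiset (ℕ × Rt) :=
  if e = g then
    (splits2 bag).bind fun p => (nApp g t p.1).map fun s => (g, app s p.2)
  else (nApp g t bag).map fun s => (e, s)

/-- `μa.⟨[b]t⟩_a [ū]`, the reduct of the μ-redex `(μa.[b]t)[ū]` -/
def muRedex (a b : ℕ) (t : Rt) (bag : List Rt) : Multiset Rt :=
  if b = a then
    (splits2 bag).bind fun p => (nApp a t p.1).map fun s => mu a a (app s p.2)
  else (nApp a t bag).map (mu a b)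

end Rt

open Rt

/-- base step of the λʳ-reduction -/
inductive BaseLam : Rt → Multiset Rt → Prop
  | step (x : ℕ) (t : Rt) (bag : List Rt) :
      BaseLam (.app (.lam x t) bag) (linSub x t bag)

/-- base step of the μʳ-reduction -/
inductive BaseMu : Rt → Multiset Rt → Prop
  | step (a b : ℕ) (t : Rt) (bag : List Rt) :
      BaseMu (.app (.mu a b t) bag) (muRedex a b t bag)

/-- base step of the ρʳ-reduction -/
inductive BaseRho : Rt → Multiset Rt → Prop
  | step (g a b e : ℕ) (t : Rt) :
      BaseRho (.mu g a (.mu b e t))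
        ({.mu g (if e = b then a else e) (renameN a b t)} : Multiset Rt)

/-- closure of a base reduction under single-hole resource contexts -/
inductive Ctx (B : Rt → Multiset Rt → Prop) : Rt → Multiset Rt → Prop
  | base {t S} : B t S → Ctx B t S
  | lam (x : ℕ) {t S} : Ctx B t S → Ctx B (.lam x t) (S.map (.lam x))
  | mu (a b : ℕ) {t S} : Ctx B t S → Ctx B (.mu a b t) (S.map (.mu a b))
  | appL (bag : List Rt) {t S} :
      Ctx B t S → Ctx B (.app t bag) (S.map fun s => .app s bag)
  | appR (t : Rt) (l r : List Rt) {u S} :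
      Ctx B u S → Ctx B (.app t (l ++ u :: r)) (S.map fun s => .app t (l ++ s :: r))

/-- the quantitative resource reduction →ᵣ⁺ from terms to sums in ℕ⟨λμʳ⟩ -/
def QStep : Rt → Multiset Rt → Prop :=
  Ctx fun t S => BaseLam t S ∨ BaseMu t S ∨ BaseRho t S

/-- the quantitative resource reduction →ᵣ⁺ on sums of ℕ⟨λμʳ⟩ -/
inductive QRed : Multiset Rt → Multiset Rt → Prop
  | mk {t : Rt} {S R : Multiset Rt} : QStep t S → QRed (t ::ₘ R) (S + R)

/-- the qualitative version (with idempotent sum, i.e. with sums in 2⟨λμʳ⟩)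
of the contextual closure of a base reduction: from terms to sums in 2⟨λμʳ⟩ -/
noncomputable def StepOf (B : Rt → Multiset Rt → Prop) (t : Rt) (T : Finset Rt) : Prop :=
  ∃ S : Multiset Rt, Ctx B t S ∧ T = S.toFinset

/-- the reduction →_{λʳ} : contextual closure of the λʳ base step, in 2⟨λμʳ⟩ -/
noncomputable def StepLam : Rt → Finset Rt → Prop := StepOf BaseLam
/-- the reduction →_{μʳ} : contextual closure of the μʳ base step, in 2⟨λμʳ⟩ -/
noncomputable def StepMu : Rt → Finset Rt → Prop := StepOf BaseMu
/-- the reduction →_{ρʳ} : contextual closure of the ρʳ base step, in 2⟨λμʳ⟩ -/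
noncomputable def StepRho : Rt → Finset Rt → Prop := StepOf BaseRho

/-- the resource reduction →ᵣ from terms to sums in 2⟨λμʳ⟩ -/
noncomputable def RStep (t : Rt) (T : Finset Rt) : Prop :=
  ∃ S : Multiset Rt, QStep t S ∧ T = S.toFinset

/-- the resource reduction →ᵣ on sums in 2⟨λμʳ⟩ -/
inductive FRed : Finset Rt → Finset Rt → Prop
  | mk {t : Rt} {R S : Finset Rt} : RStep t S → t ∉ R → FRed (insert t R) (S ∪ R)

/-- a resource term is →ᵣ-normal -/
def NormalTm (t : Rt) : Prop := ∀ S : Multiset Rt, ¬ QStep t S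

end RLMu

namespace RLMu
namespace Rt

-- number of μ-abstractions occurring in a term
mutual
  def degMu : Rt → ℕ
    | var _ => 0
    | lam _ t => degMu t
    | mu _ _ t => degMu t + 1
    | app t ts => degMu t + degMuBag ts
  def degMuBag : List Rt → ℕ
    | [] => 0
    | t :: ts => degMu t + degMuBag ts
end

-- the multiset of the depths (number of enclosing named subterms) of the
-- occurrences of bags in a term
mutual
  def depths : Rt → Multiset ℕ
    | var _ => 0
    | lam _ t => depths t
    | mu _ _ t => (depths t).map (· + 1)
    | app t ts => (0 : ℕ) ::ₘ (depths t + depthsBag ts)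
  def depthsBag : List Rt → Multiset ℕ
    | [] => 0
    | t :: ts => depths t + depthsBag ts
end

/-- the multiset measure `m(t)` : the multiset of `deg_μ(t) - d_t(b)` over the
occurrences `b` of bags in `t` -/
def msr (t : Rt) : Multiset ℕ := (depths t).map fun d => degMu t - d

end Rt

/-- the (Dershowitz–Manna) multiset order on finite multisets of naturals -/
def MLT (M N : Multiset ℕ) : Prop :=
  ∃ X Y Z : Multiset ℕ, X ≠ 0 ∧ N = Z + X ∧ M = Z + Y ∧ ∀ y ∈ Y, ∃ x ∈ X, y < x

/-- the measure `SN(t) = (m(t), deg_μ(t))` -/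
def SNm (t : Rt) : Multiset ℕ × ℕ := (Rt.msr t, Rt.degMu t)

/-- lexicographic order on `!ℕ × ℕ` (multiset order on the first component) -/
def SNlt : Multiset ℕ × ℕ → Multiset ℕ × ℕ → Prop := Prod.Lex MLT (· < ·)

end RLMu

namespace RLMu
namespace Rt

/-! ### The multiset order -/

theorem MLT.add_rel {M N A B : Multiset ℕ} (h : MLT M N) (r : Multiset.Rel (· ≤ ·) A B) :
    MLT (M + A) (N + B) := by
  induction r with
  | zero => simpa using h
  | @cons a b as bs hab _ ih =>
    obtain ⟨X, Y, Z, hX, hN, hM, hY⟩ := ih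
    rcases Nat.eq_or_lt_of_le hab with rfl | hlt
    · refine ⟨X, Y, a ::ₘ Z, hX, ?_, ?_, hY⟩
      · rw [Multiset.add_cons, hN, Multiset.cons_add]
      · rw [Multiset.add_cons, hM, Multiset.cons_add]
    · refine ⟨b ::ₘ X, a ::ₘ Y, Z, Multiset.cons_ne_zero, ?_, ?_, ?_⟩
      · rw [Multiset.add_cons, hN, Multiset.add_cons]
      · rw [Multiset.add_cons, hM, Multiset.add_cons]
      · intro y hy
        rcases Multiset.mem_cons.1 hy with rfl | hy
        · exact ⟨b, Multiset.mem_cons_self _ _, hlt⟩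
        · obtain ⟨x, hx, hlt'⟩ := hY y hy
          exact ⟨x, Multiset.mem_cons_of_mem hx, hlt'⟩

theorem eq_or_mlt_of_rel {A B : Multiset ℕ} (r : Multiset.Rel (· ≤ ·) A B) : A = B ∨ MLT A B := by
  induction r with
  | zero => exact Or.inl rfl
  | @cons a b as bs hab _ ih =>
    have hrefl : Multiset.Rel (· ≤ ·) ({a} : Multiset ℕ) {b} := by
      simpa [Multiset.singleton_eq_cons_iff] using Multiset.Rel.cons hab Multiset.Rel.zero
    rcases ih with rfl | ih
    · rcases Nat.eq_or_lt_of_le hab with rfl | hlt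
      · exact Or.inl rfl
      · refine Or.inr ⟨{b}, {a}, as, Multiset.singleton_ne_zero _, ?_, ?_, ?_⟩
        · rw [add_comm, Multiset.singleton_add]
        · rw [add_comm, Multiset.singleton_add]
        · simpa using hlt
    · right
      have := MLT.add_rel ih hrefl
      rwa [add_comm, Multiset.singleton_add, add_comm, Multiset.singleton_add] at this

theorem MLT.map_add {M N : Multiset ℕ} (K : ℕ) (h : MLT M N) :
    MLT (M.map (· + K)) (N.map (· + K)) := by
  obtain ⟨X, Y, Z, hX, rfl, rfl, hY⟩ := h
  refine ⟨X.map (· + K), Y.map (· + K), Z.map (· + K), by simpa using hX, by simp, by simp, ?_⟩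
  intro y hy
  obtain ⟨y, hy', rfl⟩ := Multiset.mem_map.1 hy
  obtain ⟨x, hx, hlt⟩ := hY y hy'
  exact ⟨x + K, Multiset.mem_map_of_mem _ hx, by omega⟩

theorem rel_map_of_le {M : Multiset ℕ} {f g : ℕ → ℕ} (h : ∀ x, f x ≤ g x) :
    Multiset.Rel (· ≤ ·) (M.map f) (M.map g) :=
  Multiset.rel_map.2 (Multiset.rel_refl_of_refl_on fun x _ => h x)

theorem wf_MLT : WellFounded MLT := by
  refine Subrelation.wf (r := Multiset.IsDershowitzMannaLT) ?_
    Multiset.wellFounded_isDershowitzMannaLT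
  rintro M N ⟨X, Y, Z, hX, hN, hM, hY⟩
  exact ⟨Z, Y, X, hX, hM, hN, hY⟩

/-! ### Domination of multisets of depths -/

/-- `Dom Q M T`: up to the addition of positive depths, `M` arises from the multiset of depths `T`
by increasing some of its elements. Additional depths are only allowed when `Q` holds; `Q` is
`False` for λ-steps, which create no bag, and `True` for μ-steps. -/
def Dom (Q : Prop) (M T : Multiset ℕ) : Prop :=
  ∃ A B, M = A + B ∧ Multiset.Rel (· ≤ ·) T A ∧ ∀ b ∈ B, 1 ≤ b ∧ Q

theorem Dom.refl (Q : Prop) (M : Multiset ℕ) : Dom Q M M :=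
  ⟨M, 0, by simp, Multiset.rel_refl_of_refl_on fun _ _ => le_rfl, by simp⟩

theorem Dom.of_eq {Q : Prop} {M T : Multiset ℕ} (h : M = T) : Dom Q M T := h ▸ Dom.refl Q M

theorem Dom.add {Q : Prop} {M T M' T' : Multiset ℕ} (h : Dom Q M T) (h' : Dom Q M' T') :
    Dom Q (M + M') (T + T') := by
  obtain ⟨A, B, rfl, hA, hB⟩ := h
  obtain ⟨A', B', rfl, hA', hB'⟩ := h'
  refine ⟨A + A', B + B', add_add_add_comm .., hA.add hA', ?_⟩
  intro b hb
  rcases Multiset.mem_add.1 hb with hb | hb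
  exacts [hB b hb, hB' b hb]

theorem Dom.succ {Q : Prop} {M T U : Multiset ℕ} (h : Dom Q M (T + U)) :
    Dom Q (M.map (· + 1)) (T.map (· + 1) + U) := by
  obtain ⟨A, B, rfl, hA, hB⟩ := h
  refine ⟨A.map (· + 1), B.map (· + 1), by simp, ?_, ?_⟩
  · have h1 : Multiset.Rel (· ≤ ·) (T.map (· + 1) + U) ((T + U).map (· + 1)) := by
      rw [Multiset.map_add]
      refine Multiset.Rel.add (Multiset.rel_refl_of_refl_on fun _ _ => le_rfl) ?_
      simpa using rel_map_of_le (M := U) (f := id) (g := (· + 1)) (fun x => Nat.le_succ x)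
    refine Multiset.Rel.trans _ h1 (Multiset.rel_map.2 (hA.mono ?_))
    intros
    omega
  · intro b hb
    obtain ⟨b, hb', rfl⟩ := Multiset.mem_map.1 hb
    exact ⟨by omega, (hB b hb').2⟩

theorem Dom.cons_pos {M T : Multiset ℕ} {d : ℕ} (hd : 1 ≤ d) (h : Dom True M T) :
    Dom True (d ::ₘ M) T := by
  obtain ⟨A, B, rfl, hA, hB⟩ := h
  refine ⟨A, d ::ₘ B, by simp, hA, ?_⟩
  intro b hb
  rcases Multiset.mem_cons.1 hb with rfl | hb
  exacts [⟨hd, trivial⟩, hB b hb]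

/-- Consuming a bag of depth `0` in exchange for a dominated multiset of depths decreases the
multiset of weights. The hypothesis `hQ` makes the weights of the additional bags smaller than `D`:
with `D = 0` the truncated difference `D - b` would not be `< D`. -/
theorem mlt_of_dom {Q : Prop} {M T : Multiset ℕ} {D : ℕ} (h : Dom Q M T) (hQ : Q → 1 ≤ D) :
    MLT (M.map (D - ·)) ((0 ::ₘ T).map (D - ·)) := by
  obtain ⟨A, B, rfl, hA, hB⟩ := h
  have h1 : MLT (B.map (D - ·)) {D} := by
    refine ⟨{D}, B.map (D - ·), 0, Multiset.singleton_ne_zero _, by simp, by simp, ?_⟩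
    intro y hy
    obtain ⟨b, hb, rfl⟩ := Multiset.mem_map.1 hy
    have h1 := hB b hb
    have h2 := hQ h1.2
    exact ⟨D, Multiset.mem_singleton_self _, by omega⟩
  have h2 : Multiset.Rel (· ≤ ·) (A.map (D - ·)) (T.map (D - ·)) := by
    rw [← Multiset.rel_flip]
    refine Multiset.rel_map.2 (hA.mono ?_)
    intro a _ b _ hab
    exact Nat.sub_le_sub_left hab D
  have h3 := MLT.add_rel h1 h2
  rw [Multiset.map_add, add_comm, Multiset.map_cons]
  simpa using h3

/-! ### Splitting a bag -/

theorem degMuBag_eq (ts : List Rt) : degMuBag ts = (ts.map degMu).sum := by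
  induction ts with
  | nil => simp [degMuBag]
  | cons t ts ih => simp [degMuBag, ih]

theorem depthsBag_eq (ts : List Rt) : depthsBag ts = (ts.map depths).sum := by
  induction ts with
  | nil => simp [depthsBag]
  | cons t ts ih => simp [depthsBag, ih]

theorem length_modifyIdx (t : Rt) (ls : List (List Rt)) (i : ℕ) :
    (modifyIdx t ls i).length = ls.length := by
  induction ls generalizing i with
  | nil => simp [modifyIdx]
  | cons l ls ih => cases i <;> simp [modifyIdx, ih]

theorem sum_modifyIdx {α : Type*} [AddCommMonoid α] (f : Rt → α) (t : Rt) (ls : List (List Rt))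
    (i : ℕ) (hi : i < ls.length) :
    ((modifyIdx t ls i).map fun l => (l.map f).sum).sum
      = f t + (ls.map fun l => (l.map f).sum).sum := by
  induction ls generalizing i with
  | nil => simp at hi
  | cons l ls ih =>
    cases i with
    | zero => simp [modifyIdx, add_assoc]
    | succ i =>
      simp only [List.length_cons, Nat.add_lt_add_iff_right] at hi
      simp [modifyIdx, ih i hi, add_left_comm]

theorem splits_spec {n : ℕ} {bag : List Rt} {ls : List (List Rt)}
    (h : ls ∈ splits n bag) :
    ls.length = n ∧ ∀ {α : Type} [AddCommMonoid α] (f : Rt → α),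
      (ls.map fun l => (l.map f).sum).sum = (bag.map f).sum := by
  induction bag generalizing ls with
  | nil =>
    simp only [splits, Multiset.mem_singleton] at h
    subst h
    simp
  | cons t ts ih =>
    simp only [splits, Multiset.mem_bind, Multiset.mem_map, Multiset.mem_range] at h
    obtain ⟨ls', h', i, hi, rfl⟩ := h
    obtain ⟨h1, h2⟩ := ih h'
    refine ⟨by rw [length_modifyIdx, h1], fun f => ?_⟩
    rw [sum_modifyIdx f t ls' i (by omega), h2 f]
    simp

theorem splits2_spec {bag : List Rt} {p : List Rt × List Rt} (h : p ∈ splits2 bag)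
    {α : Type} [AddCommMonoid α] (f : Rt → α) :
    (p.1.map f).sum + (p.2.map f).sum = (bag.map f).sum := by
  induction bag generalizing p with
  | nil =>
    simp only [splits2, Multiset.mem_singleton] at h
    subst h
    simp
  | cons t ts ih =>
    simp only [splits2, Multiset.mem_bind, Multiset.insert_eq_cons, Multiset.mem_cons,
      Multiset.mem_singleton] at h
    obtain ⟨q, hq, rfl | rfl⟩ := h
    · simp [← ih hq, add_assoc]
    · simp [← ih hq, add_left_comm]

/-- The total number of μ-abstractions in a list of bags. -/
def degs (ls : List (List Rt)) : ℕ := (ls.map fun l => degMuBag l).sum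

/-- The depths of all bags occurring in a list of bags. -/
def deps (ls : List (List Rt)) : Multiset ℕ := (ls.map fun l => depthsBag l).sum

theorem splits_degs {n : ℕ} {bag : List Rt} {ls : List (List Rt)}
    (h : ls ∈ splits n bag) : degs ls = degMuBag bag ∧ deps ls = depthsBag bag := by
  simp only [degs, deps, degMuBag_eq, depthsBag_eq]
  exact ⟨(splits_spec h).2 degMu, (splits_spec h).2 depths⟩

theorem splits2_degs {bag : List Rt} {p : List Rt × List Rt} (h : p ∈ splits2 bag) :
    degMuBag p.1 + degMuBag p.2 = degMuBag bag ∧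
      depthsBag p.1 + depthsBag p.2 = depthsBag bag := by
  simp only [degMuBag_eq, depthsBag_eq]
  exact ⟨splits2_spec h degMu, splits2_spec h depths⟩

/-! ### Linear substitution, named application and renaming -/

/-- The quantitative trace of `s` arising from `t` by inserting each resource of `bag` exactly
once: no μ-abstraction is lost or created, no bag gets closer to the root, and bags are created, at
positive depth, only if `Q` holds. -/
def Uses (Q : Prop) (s t : Rt) (bag : List Rt) : Prop :=
  degMu s = degMu t + degMuBag bag ∧ Dom Q (depths s) (depths t + depthsBag bag)

/-- The analogue of `Uses` for a list of terms `ts`, where the `i`-th term uses the resources of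
the `i`-th bag of `ls`. -/
def UsesBag (Q : Prop) (ss ts : List Rt) (ls : List (List Rt)) : Prop :=
  degMuBag ss = degMuBag ts + degs ls ∧ Dom Q (depthsBag ss) (depthsBag ts + deps ls)

theorem Uses.nil (Q : Prop) (t : Rt) : Uses Q t t [] :=
  ⟨by simp [degMuBag], Dom.of_eq (by simp [depthsBag])⟩

theorem Uses.lam {Q : Prop} {s t : Rt} {bag : List Rt} (y : ℕ) (h : Uses Q s t bag) :
    Uses Q (lam y s) (lam y t) bag := by
  simpa [Uses, degMu, depths] using h

theorem Uses.mu {Q : Prop} {s t : Rt} {bag : List Rt} (g e : ℕ) (h : Uses Q s t bag) :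
    Uses Q (mu g e s) (mu g e t) bag := by
  refine ⟨?_, ?_⟩
  · simp only [degMu, h.1]
    omega
  · simpa only [depths] using h.2.succ

theorem Uses.app {Q : Prop} {s t : Rt} {ss ts l0 bag : List Rt} {rest : List (List Rt)}
    (h : Uses Q s t l0) (h' : UsesBag Q ss ts rest)
    (hl : l0 :: rest ∈ splits (ts.length + 1) bag) :
    Uses Q (app s ss) (app t ts) bag := by
  obtain ⟨h1, h2⟩ := splits_degs hl
  simp only [degs, deps, List.map_cons, List.sum_cons] at h1 h2
  refine ⟨?_, ?_⟩
  · simp only [degMu, h.1, h'.1, ← h1, degs]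
    omega
  · have h3 := (Dom.refl Q {0}).add (h.2.add h'.2)
    simp only [depths, ← h2, ← Multiset.singleton_add]
    refine (congrArg _ ?_).mp h3
    simp only [deps]
    abel

theorem UsesBag.cons {Q : Prop} {s t : Rt} {ss ts l : List Rt} {ls : List (List Rt)}
    (h : Uses Q s t l) (h' : UsesBag Q ss ts ls) : UsesBag Q (s :: ss) (t :: ts) (l :: ls) := by
  refine ⟨?_, ?_⟩
  · simp only [degMuBag, h.1, h'.1, degs, List.map_cons, List.sum_cons]
    omega
  · have h3 := h.2.add h'.2
    simp only [depthsBag, deps, List.map_cons, List.sum_cons] at h3 ⊢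
    refine (congrArg _ ?_).mp h3
    abel

theorem UsesBag.nil (Q : Prop) : UsesBag Q [] [] [] :=
  ⟨by simp [degMuBag, degs], Dom.of_eq (by simp [depthsBag, deps])⟩

mutual
  theorem linSub_spec (x : ℕ) : ∀ (t : Rt) (bag : List Rt) (s : Rt),
      s ∈ linSub x t bag → Uses False s t bag
    | var y, bag, s, h => by
        by_cases hy : y = x
        · rcases bag with _ | ⟨u, _ | ⟨v, bag⟩⟩ <;> simp [linSub, hy] at h
          subst h
          exact ⟨by simp [degMu, degMuBag], Dom.of_eq (by simp [depths, depthsBag])⟩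
        · rcases bag with _ | ⟨u, bag⟩ <;> simp [linSub, hy] at h
          subst h
          exact Uses.nil _ _
    | lam y t, bag, s, h => by
        by_cases hy : y = x
        · rcases bag with _ | ⟨u, bag⟩ <;> simp [linSub, hy] at h
          subst h
          simpa [hy] using Uses.nil _ _
        · simp only [linSub, hy, if_false] at h
          obtain ⟨s', hs, rfl⟩ := Multiset.mem_map.1 h
          exact (linSub_spec x t bag s' hs).lam y
    | mu g e t, bag, s, h => by
        rw [linSub] at h
        obtain ⟨s', hs, rfl⟩ := Multiset.mem_map.1 h
        exact (linSub_spec x t bag s' hs).mu g e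
    | app t ts, bag, s, h => by
        rw [linSub, Multiset.mem_bind] at h
        obtain ⟨ls, hls, h⟩ := h
        rcases ls with _ | ⟨l0, rest⟩
        · simp at h
        · simp only [Multiset.mem_bind, Multiset.mem_map] at h
          obtain ⟨s', hs, ss, hss, rfl⟩ := h
          exact (linSub_spec x t l0 s' hs).app (linSubBag_spec x ts rest ss hss) hls
  theorem linSubBag_spec (x : ℕ) : ∀ (ts : List Rt) (ls : List (List Rt)) (ss : List Rt),
      ss ∈ linSubBag x ts ls → UsesBag False ss ts ls
    | [], [], ss, h => by
        simp only [linSubBag, Multiset.mem_singleton] at h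
        subst h
        exact UsesBag.nil _
    | [], _ :: _, ss, h => by simp [linSubBag] at h
    | _ :: _, [], ss, h => by simp [linSubBag] at h
    | t :: ts, l :: ls, ss, h => by
        simp only [linSubBag, Multiset.mem_bind, Multiset.mem_map] at h
        obtain ⟨s, hs, ss', hss, rfl⟩ := h
        exact UsesBag.cons (linSub_spec x t l s hs) (linSubBag_spec x ts ls ss' hss)
end

/-- Applying the body of a μ-abstraction to a part of the bag creates one bag, of depth `1`. -/
theorem Uses.mu_app {s t : Rt} {bag : List Rt} {p : List Rt × List Rt} (g e : ℕ)
    (hp : p ∈ splits2 bag) (h : Uses True s t p.1) :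
    Uses True (Rt.mu g e (Rt.app s p.2)) (Rt.mu g e t) bag := by
  obtain ⟨h1, h2⟩ := splits2_degs hp
  refine ⟨?_, ?_⟩
  · simp only [degMu, h.1, ← h1]
    omega
  · have h3 : Dom True (depths s + depthsBag p.2) (depths t + depthsBag bag) := by
      rw [← h2, ← add_assoc]
      exact h.2.add (Dom.refl _ _)
    simp only [depths, Multiset.map_cons]
    exact Dom.cons_pos (by omega) h3.succ

mutual
  theorem nApp_spec (a : ℕ) : ∀ (t : Rt) (bag : List Rt) (s : Rt),
      s ∈ nApp a t bag → Uses True s t bag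
    | var y, bag, s, h => by
        rcases bag with _ | ⟨u, bag⟩ <;> simp [nApp] at h
        subst h
        exact Uses.nil _ _
    | lam y t, bag, s, h => by
        rw [nApp] at h
        obtain ⟨s', hs, rfl⟩ := Multiset.mem_map.1 h
        exact (nApp_spec a t bag s' hs).lam y
    | mu g e t, bag, s, h => by
        by_cases hg : g = a
        · rcases bag with _ | ⟨u, bag⟩ <;> simp [nApp, hg] at h
          subst h
          simpa [hg] using Uses.nil _ _
        simp only [nApp, hg, if_false] at h
        split_ifs at h
        · simp only [Multiset.mem_bind, Multiset.mem_map] at h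
          obtain ⟨p, hp, s', hs, rfl⟩ := h
          exact Uses.mu_app g e hp (nApp_spec a t p.1 s' hs)
        · obtain ⟨s', hs, rfl⟩ := Multiset.mem_map.1 h
          exact (nApp_spec a t bag s' hs).mu g e
    | app t ts, bag, s, h => by
        rw [nApp, Multiset.mem_bind] at h
        obtain ⟨ls, hls, h⟩ := h
        rcases ls with _ | ⟨l0, rest⟩
        · simp at h
        · simp only [Multiset.mem_bind, Multiset.mem_map] at h
          obtain ⟨s', hs, ss, hss, rfl⟩ := h
          exact (nApp_spec a t l0 s' hs).app (nAppBag_spec a ts rest ss hss) hls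
  theorem nAppBag_spec (a : ℕ) : ∀ (ts : List Rt) (ls : List (List Rt)) (ss : List Rt),
      ss ∈ nAppBag a ts ls → UsesBag True ss ts ls
    | [], [], ss, h => by
        simp only [nAppBag, Multiset.mem_singleton] at h
        subst h
        exact UsesBag.nil _
    | [], _ :: _, ss, h => by simp [nAppBag] at h
    | _ :: _, [], ss, h => by simp [nAppBag] at h
    | t :: ts, l :: ls, ss, h => by
        simp only [nAppBag, Multiset.mem_bind, Multiset.mem_map] at h
        obtain ⟨s, hs, ss', hss, rfl⟩ := h
        exact UsesBag.cons (nApp_spec a t l s hs) (nAppBag_spec a ts ls ss' hss)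
end

theorem muRedex_spec {a b : ℕ} {t : Rt} {bag : List Rt} {s : Rt} (h : s ∈ muRedex a b t bag) :
    Uses True s (mu a b t) bag := by
  rw [muRedex] at h
  split_ifs at h with hab
  · subst hab
    simp only [Multiset.mem_bind, Multiset.mem_map] at h
    obtain ⟨p, hp, s', hs, rfl⟩ := h
    exact Uses.mu_app _ _ hp (nApp_spec _ t p.1 s' hs)
  · obtain ⟨s', hs, rfl⟩ := Multiset.mem_map.1 h
    exact (nApp_spec a t bag s' hs).mu a b

mutual
  theorem renameN_spec (a b : ℕ) : ∀ t : Rt,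
      degMu (renameN a b t) = degMu t ∧ depths (renameN a b t) = depths t
    | var y => by simp [renameN]
    | lam y t => by simp [renameN, degMu, depths, renameN_spec a b t]
    | mu g e t => by
        rw [renameN]
        split_ifs <;> simp [degMu, depths, renameN_spec a b t]
    | app t ts => by
        simp [renameN, degMu, depths, renameN_spec a b t, renameNBag_spec a b ts]
  theorem renameNBag_spec (a b : ℕ) : ∀ ts : List Rt,
      degMuBag (renameNBag a b ts) = degMuBag ts ∧ depthsBag (renameNBag a b ts) = depthsBag ts
    | [] => by simp [renameNBag]
    | t :: ts => by
        simp [renameNBag, degMuBag, depthsBag, renameN_spec a b t, renameNBag_spec a b ts]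
end

mutual
  theorem depths_le : ∀ (t : Rt), ∀ d ∈ depths t, d ≤ degMu t
    | var y, d, h => by simp [depths] at h
    | lam y t, d, h => by
        rw [depths] at h
        simpa [degMu] using depths_le t d h
    | mu g e t, d, h => by
        rw [depths] at h
        obtain ⟨d', hd, rfl⟩ := Multiset.mem_map.1 h
        simpa [degMu] using depths_le t d' hd
    | app t ts, d, h => by
        rw [depths] at h
        simp only [Multiset.mem_cons, Multiset.mem_add] at h
        rw [degMu]
        rcases h with rfl | h | h
        · omega
        · have := depths_le t d h
          omega
        · have := depthsBag_le ts d h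
          omega
  theorem depthsBag_le : ∀ (ts : List Rt), ∀ d ∈ depthsBag ts, d ≤ degMuBag ts
    | [], d, h => by simp [depthsBag] at h
    | t :: ts, d, h => by
        rw [depthsBag, Multiset.mem_add] at h
        rw [degMuBag]
        rcases h with h | h
        · have := depths_le t d h
          omega
        · have := depthsBag_le ts d h
          omega
end

/-! ### Decrease of the measure and closure under contexts -/

/-- The decrease of the pair (number of μ-abstractions, multiset of depths) from `(D, P)` to
`(D', P')`, in a form that is stable under contexts. -/
def Dec (D' : ℕ) (P' : Multiset ℕ) (D : ℕ) (P : Multiset ℕ) : Prop :=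
  D' ≤ D ∧ (MLT (P'.map (D' - ·)) (P.map (D - ·)) ∨
    (D' < D ∧ Multiset.Rel (· ≤ ·) (P'.map (D' - ·)) (P.map (D - ·))))

/-- A context adds a constant `K` to the weights of the bags of the redex; the truncated
subtraction is harmless there because the depths are bounded by the number of μ-abstractions. -/
theorem map_sub_add {D K : ℕ} {P E : Multiset ℕ} (hP : ∀ d ∈ P, d ≤ D) :
    (P + E).map (D + K - ·) = (P.map (D - ·)).map (· + K) + E.map (D + K - ·) := by
  rw [Multiset.map_add, Multiset.map_map]
  congr 1
  refine Multiset.map_congr rfl fun d hd => ?_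
  have := hP d hd
  simp only [Function.comp_apply]
  omega

theorem Dec.add {D' D : ℕ} {P' P : Multiset ℕ} (h : Dec D' P' D P) (hP' : ∀ d ∈ P', d ≤ D')
    (hP : ∀ d ∈ P, d ≤ D) (K : ℕ) (E : Multiset ℕ) :
    Dec (D' + K) (P' + E) (D + K) (P + E) := by
  obtain ⟨hD, h⟩ := h
  have hE : Multiset.Rel (· ≤ ·) (E.map (D' + K - ·)) (E.map (D + K - ·)) :=
    rel_map_of_le fun x => by omega
  refine ⟨by omega, ?_⟩
  rw [map_sub_add hP', map_sub_add hP]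
  rcases h with h | ⟨hlt, h⟩
  · exact Or.inl (MLT.add_rel (MLT.map_add K h) hE)
  · refine Or.inr ⟨by omega, Multiset.Rel.add (Multiset.rel_map.2 (h.mono ?_)) hE⟩
    intros
    omega

theorem Dec.succ {D' D : ℕ} {P' P : Multiset ℕ} (h : Dec D' P' D P) :
    Dec (D' + 1) (P'.map (· + 1)) (D + 1) (P.map (· + 1)) := by
  obtain ⟨hD, h⟩ := h
  refine ⟨by omega, ?_⟩
  simpa [Multiset.map_map, Function.comp_def] using h

/-- The relation `Dec` between the terms `s` and `t`. -/
def DecT (s t : Rt) : Prop := Dec (degMu s) (depths s) (degMu t) (depths t)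

theorem DecT.of_uses {Q : Prop} {s t : Rt} {bag : List Rt} (h : Uses Q s t bag)
    (hQ : Q → 1 ≤ degMu t) : DecT s (app t bag) := by
  obtain ⟨h1, h2⟩ := h
  rw [DecT, degMu, depths, h1]
  exact ⟨le_rfl, Or.inl (mlt_of_dom h2 fun q => (hQ q).trans (Nat.le_add_right _ _))⟩

theorem degMuBag_append (l r : List Rt) : degMuBag (l ++ r) = degMuBag l + degMuBag r := by
  simp [degMuBag_eq]

theorem depthsBag_append (l r : List Rt) : depthsBag (l ++ r) = depthsBag l + depthsBag r := by
  simp [depthsBag_eq]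

theorem decT_of_qstep {t : Rt} {S : Multiset Rt} (h : QStep t S) : ∀ s ∈ S, DecT s t := by
  induction h with
  | base hB =>
    intro s hs
    rcases hB with hB | hB | hB
    · cases hB with
      | step x t bag => exact DecT.of_uses ((linSub_spec x t bag s hs).imp (by simp [degMu])
          (by simp [depths])) False.elim
    · cases hB with
      | step a b t bag => exact DecT.of_uses (muRedex_spec hs) fun _ => by simp [degMu]
    · cases hB with
      | step g a b e t =>
        rw [Multiset.mem_singleton] at hs
        subst hs
        obtain ⟨h1, h2⟩ := renameN_spec a b t
        simp only [DecT, Dec, degMu, depths, h1, h2, Multiset.map_map]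
        refine ⟨by omega, Or.inr ⟨by omega, rel_map_of_le fun x => ?_⟩⟩
        simp only [Function.comp_apply]
        omega
  | lam x _ ih =>
    intro s hs
    obtain ⟨s', hs', rfl⟩ := Multiset.mem_map.1 hs
    simpa [DecT, degMu, depths] using ih s' hs'
  | mu a b _ ih =>
    intro s hs
    obtain ⟨s', hs', rfl⟩ := Multiset.mem_map.1 hs
    simpa only [DecT, degMu, depths] using (ih s' hs').succ
  | @appL bag t S _ ih =>
    intro s hs
    obtain ⟨s', hs', rfl⟩ := Multiset.mem_map.1 hs
    have h := (ih s' hs').add (depths_le s') (depths_le t) (degMuBag bag) (0 ::ₘ depthsBag bag)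
    simpa only [DecT, degMu, depths, Multiset.add_cons] using h
  | @appR t l r u S _ ih =>
    intro s hs
    obtain ⟨s', hs', rfl⟩ := Multiset.mem_map.1 hs
    have h := (ih s' hs').add (depths_le s') (depths_le u) (degMu t + degMuBag l + degMuBag r)
      (0 ::ₘ (depths t + depthsBag l + depthsBag r))
    have hd : ∀ v : Rt, degMu (app t (l ++ v :: r))
        = degMu v + (degMu t + degMuBag l + degMuBag r) := by
      intro v
      simp only [degMu, degMuBag_append, degMuBag]
      omega
    have hp : ∀ v : Rt, depths (app t (l ++ v :: r))
        = depths v + 0 ::ₘ (depths t + depthsBag l + depthsBag r) := by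
      intro v
      simp only [depths, depthsBag_append, depthsBag, ← Multiset.singleton_add]
      abel
    simpa only [DecT, hd, hp] using h

theorem DecT.snlt {s t : Rt} (h : DecT s t) : SNlt (SNm s) (SNm t) := by
  obtain ⟨_, h | ⟨hlt, h⟩⟩ := h
  · exact Prod.Lex.left _ _ h
  · rcases eq_or_mlt_of_rel h with h | h
    · have hm : msr s = msr t := h
      rw [SNm, SNm, hm]
      exact Prod.Lex.right _ hlt
    · exact Prod.Lex.left _ _ h

theorem wf_SNlt : WellFounded SNlt := wf_MLT.prod_lex Nat.lt_wfRel.wf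

/-- A reduction of sums replaces one addend by finitely many addends of smaller measure. -/
theorem cutExpand_of_fred {F G : Finset Rt} (h : FRed F G) :
    Relation.CutExpand (InvImage SNlt SNm) G.val F.val := by
  obtain ⟨⟨S', hS, rfl⟩, hR⟩ := h
  rename_i t R
  -- only the addends that are not already present in `R` are new, the sum being idempotent
  refine ⟨(S'.toFinset \ R).val, t, ?_, ?_⟩
  · intro s hs
    rw [Finset.mem_val, Finset.mem_sdiff, Multiset.mem_toFinset] at hs
    exact (decT_of_qstep hS s hs.1).snlt
  · have h1 : (S'.toFinset ∪ R).val = (S'.toFinset \ R).val + R.val := by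
      rw [← Finset.sdiff_union_self_eq_union,
        ← Finset.disjUnion_eq_union _ _ Finset.sdiff_disjoint]
      rfl
    rw [h1, Finset.insert_val_of_notMem hR, ← Multiset.singleton_add]
    abel

end Rt

open Rt

/-- Corollary 2.12 (SN): any →ᵣ-reduction step strictly decreases the measure
`SN(t) = (m(t), deg_μ(t))` of the contracted addend (in the lexicographic
order); consequently the resource reduction →ᵣ on sums in 2⟨λμʳ⟩ is strongly
normalising. -/
theorem strong_normalisation :
    (∀ (t t' : Rt) (T : Finset Rt), RStep t (insert t' T) → SNlt (SNm t') (SNm t)) ∧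
    ¬ ∃ f : ℕ → Finset Rt, ∀ n : ℕ, FRed (f n) (f (n + 1)) := by
  refine ⟨?_, ?_⟩
  · rintro t t' T ⟨S, hS, hT⟩
    refine (decT_of_qstep hS t' ?_).snlt
    rw [← Multiset.mem_toFinset, ← hT]
    exact Finset.mem_insert_self _ _
  · rintro ⟨f, hf⟩
    have wf := (InvImage.wf SNm wf_SNlt).cutExpand
    exact (wellFounded_iff_isEmpty_descending_chain.1 wf).false
      ⟨fun n => (f n).val, fun n => cutExpand_of_fred (hf n)⟩

end RLMu
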